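/- For every P ∈ 𝒫(Z), B(P,ℰ) = H(P) − sup_{θ∈ℝ^d}(⟨θ, μ(P)⟩ − Υ(θ)) = H(P) − Υ*(μ(P)). -/

import Mathlib

/-!
The Bregman divergence `B(P, Q)` is the total Fenchel–Young gap
`∑ z, (β_z (P z) + β*_z (t z) - t z * P z)`, where `t z` is the slope of `β_z` at `Q z`, because the
supremum defining `β*_z (t z)` is attained at `Q z`. For a member of the family
`t z = ⟨θ, f z⟩ - Λ θ`; since `P` has total mass one, the gap equals `H P - (⟨θ, μ P⟩ - Υ θ)`.
It is nonnegative by convexity, so `⟨θ, μ P⟩ - Υ θ` is bounded above by `H P` and the infimum of the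
gap over `θ` is `H P` minus the supremum.
-/

open Set

/-- The convex conjugate of `φ` relative to the domain `S`, evaluated at the slope `t`. It has the
junk value `0` if `fun x ↦ t * x - φ x` is unbounded above on `S` or if `S` is empty. -/
noncomputable def convexConjOn (S : Set ℝ) (φ : ℝ → ℝ) (t : ℝ) : ℝ :=
  sSup ((fun x ↦ t * x - φ x) '' S)

/-- The separable Bregman divergence with generators `β z`. It is meaningful only if each `β z` is
differentiable at `Q z`, as `deriv` is `0` otherwise. -/
noncomputable def bregmanDiv {Z : Type*} [Fintype Z] (β : Z → ℝ → ℝ) (P Q : Z → ℝ) : ℝ :=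
  ∑ z, (β z (P z) - β z (Q z) - deriv (β z) (Q z) * (P z - Q z))

/-- The dual potential of the generators `β z` at the scores `s z` with offset `r`; for
`s z = ⟨θ, f z⟩` and `r = Λ θ` it is the function `Υ θ` of the paper. -/
noncomputable def bregmanPotential {Z : Type*} [Fintype Z] (S : Z → Set ℝ) (β : Z → ℝ → ℝ)
    (s : Z → ℝ) (r : ℝ) : ℝ :=
  r + ∑ z, convexConjOn (S z) (β z) (s z - r)

section Tangent

variable {S : Set ℝ} {φ : ℝ → ℝ} {t x y : ℝ}

theorem tangent_le_of_convexOn (hφ : ConvexOn ℝ S φ) (hx : x ∈ S) (hy : y ∈ S)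
    (hφy : HasDerivAt φ t y) : φ y + t * (x - y) ≤ φ x := by
  rcases lt_trichotomy x y with hxy | rfl | hxy
  · have hslope := hφ.slope_le_of_hasDerivAt hx hy hxy hφy
    rw [slope_def_field, div_le_iff₀ (sub_pos.2 hxy)] at hslope
    linarith
  · simp
  · have hslope := hφ.le_slope_of_hasDerivAt hy hx hxy hφy
    rw [slope_def_field, le_div_iff₀ (sub_pos.2 hxy)] at hslope
    linarith

theorem tangent_le_of_convexOn_of_mem_closure (hφ : ConvexOn ℝ S φ) (hx : x ∈ closure S)
    (hφx : ContinuousWithinAt φ S x) (hy : y ∈ S) (hφy : HasDerivAt φ t y) :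
    φ y + t * (x - y) ≤ φ x := by
  have htangent : Continuous fun u ↦ φ y + t * (u - y) := by fun_prop
  exact htangent.continuousWithinAt.closure_le hx hφx
    fun u hu ↦ tangent_le_of_convexOn hφ hu hy hφy

theorem convexConjOn_eq_of_hasDerivAt (hφ : ConvexOn ℝ S φ) (hy : y ∈ S)
    (hφy : HasDerivAt φ t y) : convexConjOn S φ t = t * y - φ y := by
  refine IsGreatest.csSup_eq ⟨mem_image_of_mem _ hy, ?_⟩
  rintro _ ⟨x, hx, rfl⟩
  linarith [tangent_le_of_convexOn hφ hx hy hφy]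

end Tangent

section Bregman

variable {Z : Type*} [Fintype Z] {S : Z → Set ℝ} {β : Z → ℝ → ℝ} {P Q : Z → ℝ}

theorem bregmanDiv_nonneg (hβ : ∀ z, ConvexOn ℝ (S z) (β z))
    (hβP : ∀ z, ContinuousWithinAt (β z) (S z) (P z)) (hP : ∀ z, P z ∈ closure (S z))
    (hQ : ∀ z, Q z ∈ S z) (hβQ : ∀ z, DifferentiableAt ℝ (β z) (Q z)) :
    0 ≤ bregmanDiv β P Q := by
  refine Finset.sum_nonneg fun z _ ↦ ?_
  linarith [tangent_le_of_convexOn_of_mem_closure (hβ z) (hP z) (hβP z) (hQ z)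
    (hβQ z).hasDerivAt]

theorem bregmanDiv_eq_sum_fenchelYoung_gap {t : Z → ℝ} (hβ : ∀ z, ConvexOn ℝ (S z) (β z))
    (hQ : ∀ z, Q z ∈ S z) (hβQ : ∀ z, HasDerivAt (β z) (t z) (Q z)) :
    bregmanDiv β P Q = ∑ z, (β z (P z) + convexConjOn (S z) (β z) (t z) - t z * P z) := by
  refine Finset.sum_congr rfl fun z _ ↦ ?_
  rw [(hβQ z).deriv, convexConjOn_eq_of_hasDerivAt (hβ z) (hQ z) (hβQ z)]
  ring

theorem bregmanDiv_eq_sub_bregmanPotential {s : Z → ℝ} {r : ℝ}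
    (hβ : ∀ z, ConvexOn ℝ (S z) (β z)) (hP : ∑ z, P z = 1) (hQ : ∀ z, Q z ∈ S z)
    (hβQ : ∀ z, HasDerivAt (β z) (s z - r) (Q z)) :
    bregmanDiv β P Q =
      ∑ z, β z (P z) - (∑ z, P z * s z - bregmanPotential S β s r) := by
  have hmass : ∑ z, (s z - r) * P z = ∑ z, P z * s z - r := by
    simp only [sub_mul, Finset.sum_sub_distrib, ← Finset.mul_sum, hP, mul_one, mul_comm (s _)]
  rw [bregmanDiv_eq_sum_fenchelYoung_gap hβ hQ hβQ, Finset.sum_sub_distrib,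
    Finset.sum_add_distrib, hmass, bregmanPotential]
  ring

end Bregman

theorem ciInf_const_sub {ι : Type*} [Nonempty ι] {g : ι → ℝ} (hg : BddAbove (range g)) (c : ℝ) :
    ⨅ i, (c - g i) = c - ⨆ i, g i :=
  ((antitone_const_tsub (c := c)).map_ciSup_of_continuousAt (by fun_prop) hg).symm

theorem stmt_2_general {Z E Θ : Type*} [Fintype Z] [AddCommGroup E] [Module ℝ E] [Nonempty Θ]
    {S : Z → Set ℝ} {β : Z → ℝ → ℝ} {P : Z → ℝ} {Q : Θ → Z → ℝ} {r : Θ → ℝ}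
    (hβ : ∀ z, ConvexOn ℝ (S z) (β z)) (hβc : ∀ z, ContinuousOn (β z) (closure (S z)))
    (f : Z → E) (ℓ : Θ → Module.Dual ℝ E) (hQ : ∀ θ z, Q θ z ∈ S z)
    (hβQ : ∀ θ z, HasDerivAt (β z) (ℓ θ (f z) - r θ) (Q θ z))
    (hP : ∀ z, P z ∈ closure (S z)) (hPsum : ∑ z, P z = 1) :
    ⨅ θ, bregmanDiv β P (Q θ) = ∑ z, β z (P z) -
      ⨆ θ, (ℓ θ (∑ z, P z • f z) - bregmanPotential S β (fun z ↦ ℓ θ (f z)) (r θ)) := by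
  have hdiv θ : bregmanDiv β P (Q θ) = ∑ z, β z (P z) -
      (ℓ θ (∑ z, P z • f z) - bregmanPotential S β (fun z ↦ ℓ θ (f z)) (r θ)) := by
    simpa only [map_sum, map_smul, smul_eq_mul] using
      bregmanDiv_eq_sub_bregmanPotential hβ hPsum (hQ θ) (hβQ θ)
  have hnonneg θ : 0 ≤ bregmanDiv β P (Q θ) :=
    bregmanDiv_nonneg hβ (fun z ↦ (hβc z _ (hP z)).mono subset_closure) hP
      (hQ θ) fun z ↦ (hβQ θ z).differentiableAt
  simp only [hdiv] at hnonneg ⊢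
  exact ciInf_const_sub ⟨_, forall_mem_range.2 fun θ ↦ sub_nonneg.1 (hnonneg θ)⟩ _

theorem stmt_2 {Z : Type} [Fintype Z] [Nonempty Z] {d : ℕ}
    (β β' : Z → ℝ → ℝ)
    (hβc : ∀ z, ContinuousOn (β z) (Set.Ici 0))
    (hβsc : ∀ z, StrictConvexOn ℝ (Set.Ioi 0) (β z))
    (hβd : ∀ z x, 0 < x → HasDerivAt (β z) (β' z x) x)
    (hβ'bot : ∀ z, Filter.Tendsto (β' z) (nhdsWithin 0 (Set.Ioi 0)) Filter.atBot)
    (hβ'top : ∀ z, Filter.Tendsto (β' z) Filter.atTop Filter.atTop)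
    (e : Z → ℝ → ℝ)
    (he_pos : ∀ z r, 0 < e z r)
    (he_left : ∀ z r, β' z (e z r) = r)
    (he_right : ∀ z x, 0 < x → e z (β' z x) = x)
    (f : Z → Fin d → ℝ)
    (prob : Set (Z → ℝ))
    (hprob : prob = {P : Z → ℝ | (∀ z, 0 ≤ P z) ∧ (∑ z, P z) = 1})
    (μ : (Z → ℝ) → Fin d → ℝ)
    (hμ : ∀ P i, μ P i = ∑ z, P z * f z i)
    (H : (Z → ℝ) → ℝ)
    (hH : ∀ Q, H Q = ∑ z, β z (Q z))
    (Λ : (Fin d → ℝ) → ℝ)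
    (hΛ : ∀ θ, (∑ z, e z ((∑ i, θ i * f z i) - Λ θ)) = 1)
    (Pθ : (Fin d → ℝ) → Z → ℝ)
    (hPθ : ∀ θ z, Pθ θ z = e z ((∑ i, θ i * f z i) - Λ θ))
    (Bdiv : (Z → ℝ) → (Z → ℝ) → ℝ)
    (hBdiv : ∀ P Q, Bdiv P Q = ∑ z, (β z (P z) - β z (Q z) - β' z (Q z) * (P z - Q z)))
    (BE : (Z → ℝ) → ℝ)
    (hBE : ∀ P, BE P = ⨅ θ, Bdiv P (Pθ θ))
    (βstar : Z → ℝ → ℝ)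
    (hβstar : ∀ z t, βstar z t = sSup ((fun x => t * x - β z x) '' Set.Ioi 0))
    (Υ : (Fin d → ℝ) → ℝ)
    (hΥ : ∀ θ, Υ θ = Λ θ + ∑ z, βstar z ((∑ i, θ i * f z i) - Λ θ))
    (Υstar : (Fin d → ℝ) → ℝ)
    (hΥstar : ∀ m : Fin d → ℝ, Υstar m = sSup (Set.range fun θ : Fin d → ℝ => (∑ i, θ i * m i) - Υ θ)) :
    ∀ P ∈ prob,
      BE P = H P - sSup (Set.range fun θ : Fin d → ℝ => (∑ i, θ i * μ P i) - Υ θ) ∧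
      BE P = H P - Υstar (μ P) := by
  intro P hP
  obtain ⟨hP_nonneg, hP_sum⟩ := hprob ▸ hP
  have hPθ_pos θ z : 0 < Pθ θ z := hPθ θ z ▸ he_pos z _
  have hβPθ θ z : HasDerivAt (β z) ((∑ i, θ i * f z i) - Λ θ) (Pθ θ z) := by
    simpa only [hPθ, he_left] using hβd z _ (hPθ_pos θ z)
  have hμ_eq : μ P = ∑ z, P z • f z := by
    ext i
    simp only [hμ, Finset.sum_apply, Pi.smul_apply, smul_eq_mul]
  have hBdiv_eq θ : Bdiv P (Pθ θ) = bregmanDiv β P (Pθ θ) := by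
    simp only [hBdiv, bregmanDiv, (hβd _ _ (hPθ_pos θ _)).deriv]
  have hΥ_eq θ : Υ θ = bregmanPotential (fun _ ↦ Ioi 0) β (fun z ↦ ∑ i, θ i * f z i) (Λ θ) := by
    simp only [hΥ, hβstar, bregmanPotential, convexConjOn]
  rw [hΥstar, and_self]
  simp only [hBE, hH, hBdiv_eq, hΥ_eq, hμ_eq]
  exact stmt_2_general (fun z ↦ (hβsc z).convexOn) (fun z ↦ by simpa only [closure_Ioi] using hβc z)
    f (dotProductBilin ℝ ℝ) hPθ_pos hβPθ
    (fun z ↦ by simpa only [closure_Ioi, mem_Ici] using hP_nonneg z) hP_sum
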